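/- Let p and q be coprime integers with p ≢ q (mod 2) and |p| > |q| ≥ 1. Let q₀, q₁, …, q_n be integers defined by q₀ = p, q₁ = q, and q_j = α_{j−1} q_{j−1} − q_{j−2} for 2 ≤ j ≤ n, where α₁, …, α_{n−1} are nonzero even integers and |q₀| > |q₁| > ⋯ > |q_{n−1}| > |q_n| = 1. Let s₀, …, s_{n−1} be defined by s₀ = 0, s₁ = 1, and s_j = α_{j−1}s_{j−1} − s_{j−2} for 2 ≤ j ≤ n−1. Then S(q, 1, p; −1) = −( q_n(q_{n−1}² + 2) + q_{n−2} )/(6 q_{n−1}) − q₁/(6 q₀) − s_{n−1}/(6 q₀ q_{n−1}) − Σ_{j=1}^{n−2} α_j/6. -/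

import Mathlib

open Real

/-- The Dedekind cosecant sum
`S(q,r,p;ε) = (1/p) ∑_{j=1}^{|p|−1} ε^j csc(jqπ/p) csc(jrπ/p)`. -/
noncomputable def cosecSum (q r p : ℤ) (ε : ℝ) : ℝ :=
  (1 / (p : ℝ)) * ∑ j ∈ Finset.Icc 1 (p.natAbs - 1),
    ε ^ j * (1 / Real.sin ((j : ℝ) * (q : ℝ) * π / (p : ℝ))) *
      (1 / Real.sin ((j : ℝ) * (r : ℝ) * π / (p : ℝ)))

open Polynomial

/-!
When `p + q + r = 2 * (M + 1)`, the residues of `z ^ M / ((z ^ p - 1) * (z ^ q - 1) * (z ^ r - 1))`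
at the `p`-th roots of unity `z ≠ 1` add up to `-S(q, r, p; -1) / 4`. As the sum of all residues
vanishes, the pole at `1` yields
`S(q, r, p; -1) + S(r, p, q; -1) + S(p, q, r; -1) = -(p ^ 2 + q ^ 2 + r ^ 2) / (6 * p * q * r)`.
For `r = 1` the last term is an empty sum. Since `S(q, 1, p; -1)` depends on `q` only modulo
`2 * p`, one Euclidean step with an even quotient replaces `S(q₁, 1, q₀; -1)` by `S(q₂, 1, q₁; -1)`,
up to an explicit rational term. These terms telescope, because the Casoratian of the remainders `q`
and the continuants `s` is constant, equal to `q₀`.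
-/

section Residues

variable {ι F : Type*} [Field F] {s : Finset ι} {v : ι → F}

theorem sum_eval_div_eval_derivative_nodal (hv : Set.InjOn v s) {P : F[X]}
    (hP : P.degree < s.card) :
    ∑ i ∈ s, P.eval (v i) / (derivative (Lagrange.nodal s v)).eval (v i) =
      P.coeff (s.card - 1) := by
  classical
  rw [Lagrange.coeff_eq_sum hv hP]
  refine Finset.sum_congr rfl fun i hi => ?_
  rw [Lagrange.eval_nodal_derivative_eval_node_eq hi, Lagrange.eval_nodal]

/-- The residues of `N / (X ^ m * nodal s v)` sum to zero: `H` is the Taylor polynomial of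
`N / nodal s v` at `0`, so its top coefficient is the residue at the multiple pole `0`. -/
theorem sum_eval_div_pow_mul_eval_derivative_nodal (hv : Set.InjOn v s)
    (hv0 : ∀ i ∈ s, v i ≠ 0) {N H : F[X]} {m : ℕ} (hN : N.natDegree + 2 ≤ s.card + m)
    (hH : H.natDegree < m) (hdvd : X ^ m ∣ N - Lagrange.nodal s v * H) :
    ∑ i ∈ s, N.eval (v i) / (v i ^ m * (derivative (Lagrange.nodal s v)).eval (v i)) =
      -H.coeff (m - 1) := by
  obtain ⟨K, hK⟩ := hdvd
  have hDH : (Lagrange.nodal s v * H).coeff (s.card + (m - 1)) = H.coeff (m - 1) := by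
    rw [coeff_mul_add_eq_of_natDegree_le Lagrange.natDegree_nodal.le (by lia),
      ← Lagrange.natDegree_nodal (s := s) (v := v), Lagrange.nodal_monic.coeff_natDegree, one_mul]
  have hNcoeff : N.coeff (s.card + (m - 1)) = 0 := coeff_eq_zero_of_natDegree_lt (by lia)
  have hKdeg : K.degree < s.card := by
    rw [degree_lt_iff_coeff_zero]
    intro d hd
    have hDd : (Lagrange.nodal s v * H).natDegree < d + m :=
      natDegree_mul_le.trans_lt (by rw [Lagrange.natDegree_nodal]; lia)
    rw [← coeff_X_pow_mul K m d, ← hK, coeff_sub, coeff_eq_zero_of_natDegree_lt hDd,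
      coeff_eq_zero_of_natDegree_lt (by lia), sub_zero]
  have hKcoeff : K.coeff (s.card - 1) = -H.coeff (m - 1) := by
    rw [← hDH, ← zero_sub, ← hNcoeff, ← coeff_sub, hK]
    rcases s.eq_empty_or_nonempty with rfl | hs
    · have hK0 : K = 0 := by simpa using hKdeg
      simp [hK0]
    · have := hs.card_pos
      rw [show s.card + (m - 1) = s.card - 1 + m by lia, coeff_X_pow_mul]
  rw [← hKcoeff, ← sum_eval_div_eval_derivative_nodal hv hKdeg]
  refine Finset.sum_congr rfl fun i hi => ?_
  have hNK : N.eval (v i) = v i ^ m * K.eval (v i) := by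
    simpa [Lagrange.eval_nodal_at_node hi] using congrArg (eval (v i)) hK
  rw [hNK, mul_div_mul_left _ _ (pow_ne_zero m (hv0 i hi))]

end Residues

section RootsOfUnity

/-- The complex `n`-th roots of unity other than `1`. -/
noncomputable def nontrivialRootsOfUnity (n : ℕ) : Finset ℂ :=
  (nthRootsFinset n (1 : ℂ)).erase 1

/-- The polynomial `((X + 1) ^ n - 1) / X`, given by its roots `t - 1`: the variable is centred
at the trivial root of unity, which becomes the multiple pole `0`. -/
noncomputable def shiftedGeomSum (n : ℕ) : ℂ[X] :=
  Lagrange.nodal (nontrivialRootsOfUnity n) (fun t => t - 1)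

variable {n : ℕ}

theorem mem_nontrivialRootsOfUnity (hn : 0 < n) {t : ℂ} :
    t ∈ nontrivialRootsOfUnity n ↔ t ≠ 1 ∧ t ^ n = 1 := by
  rw [nontrivialRootsOfUnity, Finset.mem_erase, mem_nthRootsFinset hn]

theorem card_nontrivialRootsOfUnity (hn : 0 < n) : (nontrivialRootsOfUnity n).card = n - 1 := by
  rw [nontrivialRootsOfUnity, Finset.card_erase_of_mem (one_mem_nthRootsFinset hn),
    (Complex.isPrimitiveRoot_exp n hn.ne').card_nthRootsFinset]

theorem disjoint_nontrivialRootsOfUnity {m : ℕ} (hm : 0 < m) (hn : 0 < n) (h : m.Coprime n) :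
    Disjoint (nontrivialRootsOfUnity m) (nontrivialRootsOfUnity n) := by
  rw [Finset.disjoint_left]
  intro t htm htn
  rw [mem_nontrivialRootsOfUnity hm] at htm
  rw [mem_nontrivialRootsOfUnity hn] at htn
  exact htm.1 (by simpa only [h.gcd_eq_one, pow_one] using pow_gcd_eq_one.2 ⟨htm.2, htn.2⟩)

theorem X_mul_shiftedGeomSum (hn : 0 < n) : X * shiftedGeomSum n = (X + 1) ^ n - 1 := by
  have hprod : (X - 1) * ∏ t ∈ nontrivialRootsOfUnity n, (X - C t) = X ^ n - 1 := by
    rw [X_pow_sub_one_eq_prod hn (Complex.isPrimitiveRoot_exp n hn.ne'), nontrivialRootsOfUnity,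
      ← Finset.mul_prod_erase _ _ (one_mem_nthRootsFinset hn), C_1]
  have hshift := congrArg (fun P : ℂ[X] => P.comp (X + 1)) hprod
  simpa [shiftedGeomSum, Lagrange.nodal_eq, prod_comp, sub_eq_add_neg, add_assoc, add_comm,
    add_left_comm] using hshift

theorem coeff_shiftedGeomSum (hn : 0 < n) (k : ℕ) :
    (shiftedGeomSum n).coeff k = n.choose (k + 1) := by
  rw [← coeff_X_mul, X_mul_shiftedGeomSum hn, coeff_sub, coeff_X_add_one_pow, coeff_one,
    if_neg k.succ_ne_zero, sub_zero]

theorem sum_nontrivialRootsOfUnity (hn : 0 < n) (f : ℂ → ℂ) :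
    ∑ t ∈ nontrivialRootsOfUnity n, f t =
      ∑ j ∈ Finset.Icc 1 (n - 1), f (Complex.exp (2 * π * Complex.I / n) ^ j) := by
  have hζ := Complex.isPrimitiveRoot_exp n hn.ne'
  have : NeZero n := ⟨hn.ne'⟩
  symm
  refine Finset.sum_nbij (Complex.exp (2 * π * Complex.I / n) ^ ·) (fun j hj => ?_)
    (fun i hi j hj hij => ?_) (fun t ht => ?_) (fun _ _ => rfl)
  · rw [Finset.mem_Icc] at hj
    rw [mem_nontrivialRootsOfUnity hn, pow_right_comm, hζ.pow_eq_one, one_pow]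
    exact ⟨hζ.pow_ne_one_of_pos_of_lt (by lia) (by lia), rfl⟩
  · rw [Finset.coe_Icc, Set.mem_Icc] at hi hj
    exact hζ.pow_inj (by lia) (by lia) hij
  · obtain ⟨ht1, htn⟩ := (mem_nontrivialRootsOfUnity hn).1 ht
    obtain ⟨i, hi, rfl⟩ := hζ.eq_pow_of_pow_eq_one htn
    have hi0 : i ≠ 0 := fun h => ht1 (by rw [h, pow_zero])
    exact ⟨i, by rw [Finset.coe_Icc, Set.mem_Icc]; lia, rfl⟩

variable {ι : Type*} [Fintype ι] [DecidableEq ι] {N : ι → ℕ}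

theorem pow_mul_eval_derivative_prod_shiftedGeomSum (hN : ∀ i, 0 < N i) (i : ι) {t : ℂ}
    (ht : t ∈ nontrivialRootsOfUnity (N i)) :
    t * ((t - 1) ^ Fintype.card ι * (derivative (∏ j, shiftedGeomSum (N j))).eval (t - 1)) =
      N i * ∏ j ∈ Finset.univ.erase i, (t ^ N j - 1) := by
  have htN : t ^ N i = 1 := ((mem_nontrivialRootsOfUnity (hN i)).1 ht).2
  have hD : X ^ Fintype.card ι * ∏ j, shiftedGeomSum (N j) =
      ((X + 1) ^ N i - 1) * ∏ j ∈ Finset.univ.erase i, ((X + 1) ^ N j - 1) := by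
    rw [Finset.mul_prod_erase _ (fun j => (X + 1 : ℂ[X]) ^ N j - 1) (Finset.mem_univ i),
      ← Finset.card_univ, ← Finset.prod_const, ← Finset.prod_mul_distrib]
    exact Finset.prod_congr rfl fun j _ => X_mul_shiftedGeomSum (hN j)
  have hroot : (∏ j, shiftedGeomSum (N j)).eval (t - 1) = 0 := by
    rw [eval_prod]
    exact Finset.prod_eq_zero (Finset.mem_univ i)
      (Lagrange.eval_nodal_at_node (v := fun t : ℂ => t - 1) ht)
  have hderiv := congrArg (fun P => (derivative P).eval (t - 1)) hD
  simp only [derivative_mul, derivative_sub, derivative_pow, derivative_add, derivative_X,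
    derivative_one, eval_add, eval_mul, eval_sub, eval_pow, eval_X, eval_one, eval_C, eval_prod,
    hroot, sub_add_cancel, htN, sub_self, mul_zero, zero_mul, zero_add, add_zero, sub_zero,
    mul_one] at hderiv
  rw [hderiv, ← mul_assoc, mul_left_comm, mul_pow_sub_one (hN i).ne', htN, mul_one]

/-- The residue theorem for `z ^ M / ∏ i, (z ^ N i - 1)`, whose Laurent expansion at the pole
`z = 1` starts with `H (z - 1) / (z - 1) ^ Fintype.card ι`. -/
theorem sum_sum_nontrivialRootsOfUnity (hN : ∀ i, 0 < N i)
    (hcop : Pairwise (Function.onFun Nat.Coprime N)) {M : ℕ} (hM : M + 2 ≤ ∑ i, N i) {H : ℂ[X]}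
    (hH : H.natDegree < Fintype.card ι)
    (hdvd : X ^ Fintype.card ι ∣ (X + 1) ^ M - (∏ i, shiftedGeomSum (N i)) * H) :
    ∑ i, ∑ t ∈ nontrivialRootsOfUnity (N i),
        t ^ (M + 1) / (N i * ∏ j ∈ Finset.univ.erase i, (t ^ N j - 1)) =
      -H.coeff (Fintype.card ι - 1) := by
  set T := Finset.univ.biUnion fun i => nontrivialRootsOfUnity (N i)
  have hdisj : Set.PairwiseDisjoint ↑(Finset.univ : Finset ι)
      fun i => nontrivialRootsOfUnity (N i) :=
    fun i _ j _ hij => disjoint_nontrivialRootsOfUnity (hN i) (hN j) (hcop hij)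
  have hT : ∀ t ∈ T, ∃ i, t ∈ nontrivialRootsOfUnity (N i) := by simp [T]
  have hnodal : Lagrange.nodal T (fun t => t - 1) = ∏ i, shiftedGeomSum (N i) :=
    Finset.prod_biUnion hdisj
  have hcard : T.card + Fintype.card ι = ∑ i, N i := by
    rw [Finset.card_biUnion hdisj, ← Finset.card_univ, Finset.card_eq_sum_ones,
      ← Finset.sum_add_distrib]
    exact Finset.sum_congr rfl fun i _ => by
      rw [card_nontrivialRootsOfUnity (hN i), Nat.sub_add_cancel (hN i)]
  have hdeg : ((X + 1 : ℂ[X]) ^ M).natDegree = M := natDegree_pow_X_add_C M 1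
  rw [← sum_eval_div_pow_mul_eval_derivative_nodal (s := T) (v := fun t : ℂ => t - 1)
      (sub_left_injective.injOn) (fun t ht => ?_) (by rwa [hdeg, hcard]) hH (by rwa [hnodal]),
    Finset.sum_biUnion hdisj]
  · refine Finset.sum_congr rfl fun i _ => Finset.sum_congr rfl fun t ht => ?_
    have ht0 : t ≠ 0 := by
      rintro rfl
      simpa [(hN i).ne'] using (mem_nontrivialRootsOfUnity (hN i)).1 ht
    rw [← pow_mul_eval_derivative_prod_shiftedGeomSum hN i ht, hnodal, pow_succ',
      mul_div_mul_left _ _ ht0]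
    simp
  · obtain ⟨i, hi⟩ := hT t ht
    exact sub_ne_zero.2 ((mem_nontrivialRootsOfUnity (hN i)).1 hi).1

end RootsOfUnity

section Reciprocity

theorem cast_choose_three (n : ℕ) : (n.choose 3 : ℂ) = n * (n - 1) * (n - 2) / 6 := by
  rw [Nat.cast_choose_eq_descPochhammer_div]
  simp [descPochhammer_succ_right, Nat.factorial]

theorem mul_coeff_two {R : Type*} [Semiring R] (f g : R[X]) :
    (f * g).coeff 2 = f.coeff 0 * g.coeff 2 + f.coeff 1 * g.coeff 1 + f.coeff 2 * g.coeff 0 := by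
  simp [coeff_mul, Finset.Nat.antidiagonal_succ, add_assoc]

theorem coeff_quadratic {R : Type*} [Semiring R] (a b c : R) :
    (C a * X ^ 2 + C b * X + C c).coeff 0 = c ∧ (C a * X ^ 2 + C b * X + C c).coeff 1 = b ∧
      (C a * X ^ 2 + C b * X + C c).coeff 2 = a := by
  simp

/-- Substituting `X + 1 = exp (2 * y)` turns the quotient of `(X + 1) ^ M` by the three factors
`(X + 1) ^ n - 1` into `exp (-2 * y) / (8 * sinh (p * y) * sinh (q * y) * sinh (r * y))`, whose
expansion at `y = 0` gives the coefficients. -/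
theorem X_pow_three_dvd_sub_prod_shiftedGeomSum_mul {p q r M : ℕ} (hp : 0 < p) (hq : 0 < q)
    (hr : 0 < r) (hM : p + q + r = 2 * (M + 1)) :
    X ^ 3 ∣ (X + 1) ^ M - shiftedGeomSum p * shiftedGeomSum q * shiftedGeomSum r *
      (C (-(p ^ 2 + q ^ 2 + r ^ 2) / (24 * p * q * r) : ℂ) * X ^ 2 +
        C (1 / (2 * p * q * r) : ℂ) * X + C (1 / (p * q * r) : ℂ)) := by
  have hMC : (M : ℂ) = (p + q + r) / 2 - 1 := by
    have := congrArg (Nat.cast (R := ℂ)) hM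
    push_cast at this
    linear_combination (-1 / 2 : ℂ) * this
  have hpC : (p : ℂ) ≠ 0 := mod_cast hp.ne'
  have hqC : (q : ℂ) ≠ 0 := mod_cast hq.ne'
  have hrC : (r : ℂ) ≠ 0 := mod_cast hr.ne'
  obtain ⟨hH0, hH1, hH2⟩ := coeff_quadratic (-(p ^ 2 + q ^ 2 + r ^ 2) / (24 * p * q * r) : ℂ)
    (1 / (2 * p * q * r)) (1 / (p * q * r))
  simp only [X_pow_dvd_iff, Nat.forall_lt_succ_right, Nat.not_lt_zero, IsEmpty.forall_iff,
    forall_const, true_and, coeff_sub, sub_eq_zero, mul_coeff_zero, mul_coeff_one, mul_coeff_two,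
    hH0, hH1, hH2, coeff_shiftedGeomSum, hp, hq, hr, coeff_X_add_one_pow, zero_add, Nat.reduceAdd,
    Nat.choose_zero_right, Nat.choose_one_right, Nat.cast_one, Nat.cast_choose_two,
    cast_choose_three, hMC]
  refine ⟨⟨?_, ?_⟩, ?_⟩ <;> field_simp <;> ring

theorem sum_nontrivialRootsOfUnity_three {p q r M : ℕ} (hp : 0 < p) (hq : 0 < q) (hr : 0 < r)
    (hpq : p.Coprime q) (hqr : q.Coprime r) (hrp : r.Coprime p) (hM : p + q + r = 2 * (M + 1)) :
    ∑ t ∈ nontrivialRootsOfUnity p, t ^ (M + 1) / (p * ((t ^ q - 1) * (t ^ r - 1))) +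
    ∑ t ∈ nontrivialRootsOfUnity q, t ^ (M + 1) / (q * ((t ^ r - 1) * (t ^ p - 1))) +
    ∑ t ∈ nontrivialRootsOfUnity r, t ^ (M + 1) / (r * ((t ^ p - 1) * (t ^ q - 1))) =
      ((p : ℂ) ^ 2 + q ^ 2 + r ^ 2) / (24 * p * q * r) := by
  have hpos : ∀ i, 0 < ![p, q, r] i := by
    simp [Fin.forall_fin_succ, hp, hq, hr]
  have hcop : Pairwise (Function.onFun Nat.Coprime ![p, q, r]) := by
    simpa [Pairwise, Function.onFun, Fin.forall_fin_succ] using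
      ⟨⟨hpq, hrp.symm⟩, ⟨hpq.symm, hqr⟩, hrp, hqr.symm⟩
  have hsum := sum_sum_nontrivialRootsOfUnity (ι := Fin 3) hpos hcop (M := M)
    (by rw [Fin.sum_univ_three]; simp; lia)
    (Nat.lt_succ_of_le natDegree_quadratic_le)
    (by simpa only [Fintype.card_fin, Fin.prod_univ_three, Matrix.cons_val] using
      X_pow_three_dvd_sub_prod_shiftedGeomSum_mul hp hq hr hM)
  have h0 : (Finset.univ.erase 0 : Finset (Fin 3)) = {1, 2} := by decide
  have h1 : (Finset.univ.erase 1 : Finset (Fin 3)) = {2, 0} := by decide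
  have h2 : (Finset.univ.erase 2 : Finset (Fin 3)) = {0, 1} := by decide
  rw [Fin.sum_univ_three, h0, h1, h2] at hsum
  simp only [Finset.prod_pair, ne_eq, Fin.reduceEq, not_false_eq_true, Matrix.cons_val] at hsum
  rw [hsum, Fintype.card_fin, (coeff_quadratic _ _ _).2.2, neg_div, neg_neg]

end Reciprocity

section CosecSum

theorem exp_two_mul_mul_I_sub_one (z : ℂ) :
    Complex.exp (2 * z * Complex.I) - 1 =
      Complex.exp (z * Complex.I) * (2 * Complex.I * Complex.sin z) := by
  have hE : Complex.exp (z * Complex.I) * Complex.exp (-z * Complex.I) = 1 := by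
    rw [← Complex.exp_add, neg_mul, add_neg_cancel, Complex.exp_zero]
  rw [show 2 * z * Complex.I = z * Complex.I + z * Complex.I by ring, Complex.exp_add]
  linear_combination (-Complex.exp (z * Complex.I) * Complex.I) * Complex.two_sin z + hE +
    (Complex.exp (z * Complex.I) * (Complex.exp (z * Complex.I) - Complex.exp (-z * Complex.I))) *
      Complex.I_sq

theorem ofReal_cosecSum_neg_one {p q r M : ℕ} (hp : 0 < p) (hM : p + q + r = 2 * (M + 1)) :
    (cosecSum q r p (-1) : ℂ) =
      -4 * ∑ t ∈ nontrivialRootsOfUnity p, t ^ (M + 1) / (p * ((t ^ q - 1) * (t ^ r - 1))) := by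
  have hpC : (p : ℂ) ≠ 0 := mod_cast hp.ne'
  rw [sum_nontrivialRootsOfUnity hp fun t => t ^ (M + 1) / (p * ((t ^ q - 1) * (t ^ r - 1)))]
  simp only [cosecSum, Int.natAbs_natCast, Int.cast_natCast, Complex.ofReal_mul,
    Complex.ofReal_sum, Finset.mul_sum]
  refine Finset.sum_congr rfl fun j _ => ?_
  have hpow (k : ℕ) : (Complex.exp (2 * π * Complex.I / p) ^ j) ^ k =
      Complex.exp (2 * (j * k * π / p) * Complex.I) := by
    rw [← Complex.exp_nat_mul, ← Complex.exp_nat_mul]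
    ring_nf
  have hnum : (Complex.exp (2 * π * Complex.I / p) ^ j) ^ (M + 1) = (-1) ^ j *
      (Complex.exp (j * q * π / p * Complex.I) * Complex.exp (j * r * π / p * Complex.I)) := by
    have hMC : ((M + 1 : ℕ) : ℂ) = (p + q + r) / 2 := by
      rw [eq_div_iff two_ne_zero, mul_comm]
      exact_mod_cast hM.symm
    rw [hpow, hMC, ← Complex.exp_pi_mul_I, ← Complex.exp_nat_mul, ← Complex.exp_add,
      ← Complex.exp_add]
    congr 1
    field_simp
    ring
  rw [hnum, hpow q, hpow r, exp_two_mul_mul_I_sub_one, exp_two_mul_mul_I_sub_one]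
  push_cast
  field_simp
  rw [Complex.I_sq]
  ring

theorem cosecSum_natCast_reciprocity {p q r : ℕ} (hp : 0 < p) (hq : 0 < q) (hr : 0 < r)
    (hpq : p.Coprime q) (hqr : q.Coprime r) (hrp : r.Coprime p) (heven : Even (p + q + r)) :
    cosecSum q r p (-1) + cosecSum r p q (-1) + cosecSum p q r (-1) =
      -((p : ℝ) ^ 2 + q ^ 2 + r ^ 2) / (6 * p * q * r) := by
  obtain ⟨M, hM⟩ : ∃ M, p + q + r = 2 * (M + 1) := by
    obtain ⟨k, hk⟩ := heven
    exact ⟨k - 1, by lia⟩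
  apply Complex.ofReal_injective
  push_cast
  rw [ofReal_cosecSum_neg_one hp hM, ofReal_cosecSum_neg_one hq (by lia : q + r + p = 2 * (M + 1)),
    ofReal_cosecSum_neg_one hr (by lia : r + p + q = 2 * (M + 1)), ← mul_add, ← mul_add,
    sum_nontrivialRootsOfUnity_three hp hq hr hpq hqr hrp hM]
  ring

theorem cosecSum_comm (q r p : ℤ) (ε : ℝ) : cosecSum q r p ε = cosecSum r q p ε := by
  simp only [cosecSum, mul_right_comm]

theorem cosecSum_neg_left (q r p : ℤ) (ε : ℝ) : cosecSum (-q) r p ε = -cosecSum q r p ε := by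
  simp [cosecSum, neg_div, Real.sin_neg]

theorem cosecSum_neg_middle (q r p : ℤ) (ε : ℝ) : cosecSum q (-r) p ε = -cosecSum q r p ε := by
  rw [cosecSum_comm, cosecSum_neg_left, cosecSum_comm]

theorem cosecSum_neg_right (q r p : ℤ) (ε : ℝ) : cosecSum q r (-p) ε = -cosecSum q r p ε := by
  simp [cosecSum, div_neg, Real.sin_neg]

theorem cosecSum_of_isUnit (q r : ℤ) {p : ℤ} (hp : IsUnit p) (ε : ℝ) :
    cosecSum q r p ε = 0 := by
  simp [cosecSum, Int.natAbs_of_isUnit hp]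

theorem cosecSum_add_even_mul (q r p : ℤ) (ε : ℝ) {k : ℤ} (hk : Even k) :
    cosecSum (q + k * p) r p ε = cosecSum q r p ε := by
  obtain ⟨a, rfl⟩ := hk
  obtain rfl | hp := eq_or_ne p 0
  · simp [cosecSum]
  have hpR : (p : ℝ) ≠ 0 := mod_cast hp
  have hsin (j : ℕ) : Real.sin (j * ((q + (a + a) * p : ℤ) : ℝ) * π / p) =
      Real.sin (j * q * π / p) := by
    rw [← Real.sin_add_int_mul_two_pi (j * q * π / p) (j * a)]
    push_cast
    congr 1
    field_simp
    ring
  simp only [cosecSum, hsin]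

theorem cosecSum_reciprocity {p q r : ℤ} (hp : p ≠ 0) (hq : q ≠ 0) (hr : r ≠ 0)
    (hpq : IsCoprime p q) (hqr : IsCoprime q r) (hrp : IsCoprime r p) (heven : Even (p + q + r)) :
    cosecSum q r p (-1) + cosecSum r p q (-1) + cosecSum p q r (-1) =
      -((p : ℝ) ^ 2 + q ^ 2 + r ^ 2) / (6 * p * q * r) := by
  have habs := cosecSum_natCast_reciprocity (Int.natAbs_pos.2 hp) (Int.natAbs_pos.2 hq)
    (Int.natAbs_pos.2 hr) (Int.isCoprime_iff_gcd_eq_one.1 hpq) (Int.isCoprime_iff_gcd_eq_one.1 hqr)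
    (Int.isCoprime_iff_gcd_eq_one.1 hrp) (by grind)
  clear hp hq hr hpq hqr hrp heven
  obtain ⟨a, rfl | rfl⟩ := p.eq_nat_or_neg <;> obtain ⟨b, rfl | rfl⟩ := q.eq_nat_or_neg <;>
    obtain ⟨c, rfl | rfl⟩ := r.eq_nat_or_neg <;>
    simp only [Int.natAbs_neg, Int.natAbs_natCast] at habs <;>
    simp only [cosecSum_neg_left, cosecSum_neg_middle, cosecSum_neg_right, Int.cast_neg,
      Int.cast_natCast, neg_sq] <;>
    first | linear_combination habs | linear_combination -habs

theorem cosecSum_one_reciprocity {p q : ℤ} (hp : p ≠ 0) (hq : q ≠ 0) (hpq : IsCoprime p q)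
    (hodd : Odd (p + q)) :
    cosecSum q 1 p (-1) + cosecSum p 1 q (-1) = -((p : ℝ) ^ 2 + q ^ 2 + 1) / (6 * p * q) := by
  have h := cosecSum_reciprocity hp hq one_ne_zero hpq isCoprime_one_right isCoprime_one_left
    hodd.add_one
  rw [cosecSum_comm 1 p, cosecSum_of_isUnit p q isUnit_one, add_zero] at h
  simpa using h

theorem cosecSum_one_eq_sub {p q α : ℤ} (hp : p ≠ 0) (hq : q ≠ 0) (hpq : IsCoprime p q)
    (hodd : Odd (p + q)) (hα : Even α) :
    cosecSum q 1 p (-1) =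
      cosecSum (α * q - p) 1 q (-1) - ((p : ℝ) ^ 2 + q ^ 2 + 1) / (6 * p * q) := by
  rw [sub_eq_neg_add (α * q), cosecSum_add_even_mul _ _ _ _ hα, cosecSum_neg_left]
  linear_combination cosecSum_one_reciprocity hp hq hpq hodd

theorem cosecSum_one_of_isUnit_left {p e : ℤ} (hp : p ≠ 0) (he : IsUnit e) (hodd : Odd (p + e)) :
    cosecSum e 1 p (-1) = -(e * ((p : ℝ) ^ 2 + 2)) / (6 * p) := by
  have hpR : (p : ℝ) ≠ 0 := mod_cast hp
  have heR : (e : ℝ) ≠ 0 := mod_cast he.ne_zero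
  have he2 : (e : ℝ) * e = 1 := mod_cast Int.isUnit_mul_self he
  have h := cosecSum_one_reciprocity hp he.ne_zero he.isRelPrime_right.isCoprime hodd
  rw [cosecSum_of_isUnit p 1 he, add_zero] at h
  rw [h]
  field_simp
  linear_combination (p ^ 2 + 1 : ℝ) * he2

end CosecSum

section Continuants

variable {R : Type*} [CommRing R] {α q s : ℕ → R} {n : ℕ}

/-- The first `n` steps of the three-term recurrence `q (k + 2) = α (k + 1) * q (k + 1) - q k` of a
continued fraction with minus signs, satisfied both by the remainders of the Euclidean algorithm
and by its continuants. -/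
def IsContinuantSeq (α q : ℕ → R) (n : ℕ) : Prop :=
  ∀ k < n, q (k + 2) = α (k + 1) * q (k + 1) - q k

theorem IsContinuantSeq.map {S : Type*} [CommRing S] (hq : IsContinuantSeq α q n) (f : R →+* S) :
    IsContinuantSeq (f ∘ α) (f ∘ q) n := fun k hk => by
  simp only [Function.comp_apply, hq k hk, map_sub, map_mul]

theorem IsContinuantSeq.mono {m : ℕ} (hq : IsContinuantSeq α q n) (hmn : m ≤ n) :
    IsContinuantSeq α q m := fun k hk => hq k (hk.trans_le hmn)

theorem IsContinuantSeq.casoratian_eq (hq : IsContinuantSeq α q n) (hs : IsContinuantSeq α s n)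
    {k : ℕ} (hk : k ≤ n) : s (k + 1) * q k - s k * q (k + 1) = s 1 * q 0 - s 0 * q 1 := by
  induction k with
  | zero => rfl
  | succ k ih =>
    rw [hq k hk, hs k hk]
    linear_combination ih (by lia)

theorem IsContinuantSeq.isCoprime_iff (hq : IsContinuantSeq α q n) {k : ℕ} (hk : k ≤ n) :
    IsCoprime (q k) (q (k + 1)) ↔ IsCoprime (q 0) (q 1) := by
  induction k with
  | zero => rfl
  | succ k ih =>
    rw [← ih (by lia), hq k hk, sub_eq_neg_add, mul_comm, IsCoprime.add_mul_left_right_iff,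
      IsCoprime.neg_right_iff, isCoprime_comm]

theorem IsContinuantSeq.odd_add_iff {α q : ℕ → ℤ} (hq : IsContinuantSeq α q n)
    (hα : ∀ k < n, Even (α (k + 1))) {k : ℕ} (hk : k ≤ n) :
    Odd (q k + q (k + 1)) ↔ Odd (q 0 + q 1) := by
  induction k with
  | zero => rfl
  | succ k ih =>
    have hmul : Even (α (k + 1) * q (k + 1)) := (hα k hk).mul_right _
    rw [← ih (by lia), hq k hk]
    grind

/-- Each summand is `q k / q (k + 1) + q (k + 1) / q k + 1 / (q k * q (k + 1))`: by the recurrence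
the first two kinds of terms pair up to the `α j`, and as the Casoratian of `q` and `s` is `q 0`,
the third is the increment of `s k / (q 0 * q k)`. -/
theorem IsContinuantSeq.sum_sq_add_sq_add_one_div {K : Type*} [Field K] {α q s : ℕ → K} {m : ℕ}
    (hq : IsContinuantSeq α q m) (hs : IsContinuantSeq α s m) (hs0 : s 0 = 0) (hs1 : s 1 = 1)
    (hq0 : ∀ k ≤ m + 1, q k ≠ 0) :
    ∑ k ∈ Finset.range (m + 1), (q k ^ 2 + q (k + 1) ^ 2 + 1) / (q k * q (k + 1)) =
      q m / q (m + 1) + q 1 / q 0 + s (m + 1) / (q 0 * q (m + 1)) +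
        ∑ j ∈ Finset.Icc 1 m, α j := by
  induction m with
  | zero =>
    have h0 := hq0 0 (by lia)
    have h1 := hq0 1 (by lia)
    simp only [zero_add, Finset.sum_range_one, hs1, Finset.Icc_eq_empty_of_lt one_pos,
      Finset.sum_empty]
    field_simp
    ring
  | succ m ih =>
    have h0 := hq0 0 (by lia)
    have h1 := hq0 (m + 1) (by lia)
    have h2 := hq0 (m + 2) (by lia)
    have hrec : q (m + 2) = α (m + 1) * q (m + 1) - q m := hq m (by lia)
    have hdet : s (m + 2) * q (m + 1) - s (m + 1) * q (m + 2) = q 0 := by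
      simpa [hs0, hs1] using hq.casoratian_eq hs (k := m + 1) le_rfl
    have hα : q m / q (m + 1) + q (m + 2) / q (m + 1) = α (m + 1) := by
      rw [← add_div, hrec]
      field_simp
      ring
    have hinv : 1 / (q (m + 1) * q (m + 2)) =
        s (m + 2) / (q 0 * q (m + 2)) - s (m + 1) / (q 0 * q (m + 1)) := by
      field_simp
      linear_combination -hdet
    have hsplit : (q (m + 1) ^ 2 + q (m + 2) ^ 2 + 1) / (q (m + 1) * q (m + 2)) =
        q (m + 1) / q (m + 2) + q (m + 2) / q (m + 1) + 1 / (q (m + 1) * q (m + 2)) := by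
      field_simp
    rw [Finset.sum_range_succ, Finset.sum_Icc_succ_top (by lia),
      ih (hq.mono m.le_succ) (hs.mono m.le_succ) (fun k hk => hq0 k (by lia)),
      hsplit]
    linear_combination hα + hinv

theorem IsContinuantSeq.cosecSum_one_eq_sub_sum {α q : ℕ → ℤ} (hq : IsContinuantSeq α q n)
    (hα : ∀ k < n, Even (α (k + 1))) (hq0 : ∀ k ≤ n, q k ≠ 0) (hcop : IsCoprime (q 0) (q 1))
    (hodd : Odd (q 0 + q 1)) :
    cosecSum (q 1) 1 (q 0) (-1) = cosecSum (q (n + 1)) 1 (q n) (-1) -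
      (∑ k ∈ Finset.range n, ((q k : ℝ) ^ 2 + q (k + 1) ^ 2 + 1) / (q k * q (k + 1))) / 6 := by
  induction n with
  | zero => simp
  | succ n ih =>
    have hstep := cosecSum_one_eq_sub (hq0 n (by lia)) (hq0 (n + 1) le_rfl)
      ((hq.isCoprime_iff n.le_succ).2 hcop) ((hq.odd_add_iff hα n.le_succ).2 hodd)
      (hα n n.lt_succ_self)
    rw [← hq n n.lt_succ_self] at hstep
    rw [ih (hq.mono n.le_succ) (fun k hk => hα k (by lia)) (fun k hk => hq0 k (by lia)),
      hstep, Finset.sum_range_succ]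
    ring

end Continuants

theorem stmt_18_general (n : ℕ) (hn : 2 ≤ n) (qSeq α s : ℕ → ℤ)
    (hpar : ¬ qSeq 0 ≡ qSeq 1 [ZMOD 2])
    (hα : ∀ j, 1 ≤ j → j ≤ n - 1 → Even (α j))
    (hrec : ∀ j, 2 ≤ j → j ≤ n → qSeq j = α (j - 1) * qSeq (j - 1) - qSeq (j - 2))
    (hne : ∀ j < n, qSeq j ≠ 0) (hqn : |qSeq n| = 1)
    (hs0 : s 0 = 0) (hs1 : s 1 = 1)
    (hsrec : ∀ j, 2 ≤ j → j ≤ n - 1 → s j = α (j - 1) * s (j - 1) - s (j - 2)) :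
    cosecSum (qSeq 1) 1 (qSeq 0) (-1) =
      -(((qSeq n : ℝ) * ((qSeq (n - 1) : ℝ) ^ 2 + 2) + (qSeq (n - 2) : ℝ)) /
          (6 * (qSeq (n - 1) : ℝ)))
      - (qSeq 1 : ℝ) / (6 * (qSeq 0 : ℝ))
      - (s (n - 1) : ℝ) / (6 * (qSeq 0 : ℝ) * (qSeq (n - 1) : ℝ))
      - ∑ j ∈ Finset.Icc 1 (n - 2), (α j : ℝ) / 6 := by
  obtain ⟨m, rfl⟩ : ∃ m, n = m + 2 := ⟨n - 2, by lia⟩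
  have hunit : IsUnit (qSeq (m + 2)) := Int.isUnit_iff_abs_eq.2 hqn
  have hq : IsContinuantSeq α qSeq (m + 1) := fun k hk => hrec (k + 2) (by lia) (by lia)
  have hs : IsContinuantSeq α s m := fun k hk => hsrec (k + 2) (by lia) (by lia)
  have hq0 : ∀ k ≤ m + 1, qSeq k ≠ 0 := fun k hk => hne k (by lia)
  have hαeven : ∀ k < m + 1, Even (α (k + 1)) := fun k hk => hα (k + 1) (by lia) (by lia)
  have hodd : Odd (qSeq 0 + qSeq 1) := by
    rw [Int.ModEq] at hpar
    grind
  have hcop : IsCoprime (qSeq 0) (qSeq 1) :=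
    (hq.isCoprime_iff le_rfl).1 hunit.isRelPrime_right.isCoprime
  have hsum := ((hq.mono m.le_succ).map (Int.castRingHom ℝ)).sum_sq_add_sq_add_one_div
    (hs.map (Int.castRingHom ℝ)) (by simp [hs0]) (by simp [hs1])
    (fun k hk => by simpa using hq0 k hk)
  simp only [Function.comp_apply, eq_intCast] at hsum
  rw [hq.cosecSum_one_eq_sub_sum hαeven hq0 hcop hodd, hsum, cosecSum_one_of_isUnit_left
    (hq0 (m + 1) le_rfl) hunit ((hq.odd_add_iff hαeven le_rfl).2 hodd), ← Finset.sum_div]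
  rw [show m + 2 - 1 = m + 1 from rfl, Nat.add_sub_cancel]
  ring

/-- Euclidean-algorithm (continued-fraction) evaluation of `S(q, 1, p; −1)` for
coprime `p, q` of opposite parity with `|p| > |q| ≥ 1`. -/
theorem stmt_18 (p q : ℤ) (hcop : Int.gcd p q = 1) (hpar : ¬ p ≡ q [ZMOD 2])
    (hq1 : 1 ≤ |q|) (hpq : |q| < |p|)
    (n : ℕ) (hn : 2 ≤ n)
    (qSeq α s : ℕ → ℤ)
    (hq0 : qSeq 0 = p) (hq1' : qSeq 1 = q)
    (hα : ∀ j, 1 ≤ j → j ≤ n - 1 → α j ≠ 0 ∧ Even (α j))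
    (hrec : ∀ j, 2 ≤ j → j ≤ n → qSeq j = α (j - 1) * qSeq (j - 1) - qSeq (j - 2))
    (hdec : ∀ j < n, |qSeq (j + 1)| < |qSeq j|)
    (hqn : |qSeq n| = 1)
    (hs0 : s 0 = 0) (hs1 : s 1 = 1)
    (hsrec : ∀ j, 2 ≤ j → j ≤ n - 1 → s j = α (j - 1) * s (j - 1) - s (j - 2)) :
    cosecSum q 1 p (-1) =
      -(((qSeq n : ℝ) * ((qSeq (n - 1) : ℝ) ^ 2 + 2) + (qSeq (n - 2) : ℝ)) /
          (6 * (qSeq (n - 1) : ℝ)))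
      - (qSeq 1 : ℝ) / (6 * (qSeq 0 : ℝ))
      - (s (n - 1) : ℝ) / (6 * (qSeq 0 : ℝ) * (qSeq (n - 1) : ℝ))
      - ∑ j ∈ Finset.Icc 1 (n - 2), (α j : ℝ) / 6 := by
  subst hq0 hq1'
  exact stmt_18_general n hn qSeq α s hpar (fun j h1 hj => (hα j h1 hj).2) hrec
    (fun j hj => abs_pos.1 ((abs_nonneg _).trans_lt (hdec j hj))) hqn hs0 hs1 hsrec
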